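/- In the algebra SLF(Ū_q) with convolution product, there exist complex scalars γ_s, β_s, λ_s (for the indicated ranges of s) and η_s, δ_s such that: χ^+_2 G_s = β_s G_{s−1} + γ_s G_{s+1} + λ_s (χ^+_{s−1} + χ^−_{p−s+1} − χ^+_{s+1} − χ^−_{p−s−1}) for 2 ≤ s ≤ p−2; χ^+_2 G_1 = γ_1 G_2 + λ_1 (χ^−_p − χ^+_2 − χ^−_{p−2}); χ^+_2 G_{p−1} = β_{p−1} G_{p−2} + λ_{p−1} (χ^+_{p−2} + χ^−_2 − χ^+_p); and χ^−_1 G_s = η_s G_{p−s} + δ_s (χ^+_{p−s} + χ^−_s) for 1 ≤ s ≤ p−1. -/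

import Mathlib

noncomputable section

open scoped TensorProduct

namespace Uqsl2

/-- Generators of the restricted quantum group. -/
inductive gen : Type | E | F | K | Kinv

/-- The primitive `2p`-th root of unity `q = e^{iπ/p}`. -/
def q (p : ℕ) : ℂ := Complex.exp (Real.pi * Complex.I / p)

/-- The `q`-integer `[n] = (q^n - q^{-n})/(q - q^{-1})`. -/
def qi (p : ℕ) (n : ℤ) : ℂ := (q p ^ n - q p ^ (-n)) / (q p - (q p)⁻¹)

/-- The `q`-factorial `[m]!`. -/
def qfact (p m : ℕ) : ℂ := ∏ i ∈ Finset.range m, qi p (i + 1)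

open FreeAlgebra in
/-- The defining relations of `Ū_q(sl₂)`. -/
inductive rel (p : ℕ) : FreeAlgebra ℂ gen → FreeAlgebra ℂ gen → Prop
  | KKinv : rel p (ι ℂ gen.K * ι ℂ gen.Kinv) 1
  | KinvK : rel p (ι ℂ gen.Kinv * ι ℂ gen.K) 1
  | Ep : rel p (ι ℂ gen.E ^ p) 0
  | Fp : rel p (ι ℂ gen.F ^ p) 0
  | K2p : rel p (ι ℂ gen.K ^ (2 * p)) 1
  | KE : rel p (ι ℂ gen.K * ι ℂ gen.E) (q p ^ 2 • (ι ℂ gen.E * ι ℂ gen.K))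
  | KF : rel p (ι ℂ gen.K * ι ℂ gen.F) ((q p ^ 2)⁻¹ • (ι ℂ gen.F * ι ℂ gen.K))
  | EF : rel p (ι ℂ gen.E * ι ℂ gen.F - ι ℂ gen.F * ι ℂ gen.E)
             ((q p - (q p)⁻¹)⁻¹ • (ι ℂ gen.K - ι ℂ gen.Kinv))

/-- The restricted quantum group `Ū_q(sl₂)`, presented by generators and relations. -/
abbrev Uq (p : ℕ) := RingQuot (rel p)

def EE (p : ℕ) : Uq p := RingQuot.mkAlgHom ℂ (rel p) (FreeAlgebra.ι ℂ gen.E)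
def FF (p : ℕ) : Uq p := RingQuot.mkAlgHom ℂ (rel p) (FreeAlgebra.ι ℂ gen.F)
def KK (p : ℕ) : Uq p := RingQuot.mkAlgHom ℂ (rel p) (FreeAlgebra.ι ℂ gen.K)
def KKinv (p : ℕ) : Uq p := RingQuot.mkAlgHom ℂ (rel p) (FreeAlgebra.ι ℂ gen.Kinv)

/-! ### The simple modules `X^α(s)` as matrix representations -/

/-- Matrix of `K` on `X^α(s)` in the canonical basis. -/
def XK (p : ℕ) (α : ℂ) (s : ℕ) : Matrix (Fin s) (Fin s) ℂ :=
  Matrix.diagonal fun i => α * q p ^ ((s : ℤ) - 1 - 2 * (i : ℕ))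

/-- Matrix of `E` on `X^α(s)` in the canonical basis. -/
def XE (p : ℕ) (α : ℂ) (s : ℕ) : Matrix (Fin s) (Fin s) ℂ :=
  Matrix.of fun i j =>
    if (i : ℕ) + 1 = (j : ℕ) then α * qi p (j : ℕ) * qi p ((s : ℤ) - (j : ℕ)) else 0

/-- Matrix of `F` on `X^α(s)` in the canonical basis. -/
def XF (s : ℕ) : Matrix (Fin s) (Fin s) ℂ :=
  Matrix.of fun i j => if (i : ℕ) = (j : ℕ) + 1 then (1 : ℂ) else 0

/-- The statement that `ρX α s` is the representation on `X^α(s)` for the relevant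
values of `α` and `s`. -/
def IsXRep (p : ℕ) (ρX : (α : ℂ) → (s : ℕ) → (Uq p →ₐ[ℂ] Matrix (Fin s) (Fin s) ℂ)) : Prop :=
  ∀ α : ℂ, (α = 1 ∨ α = -1) → ∀ s : ℕ, 1 ≤ s → s ≤ p →
    ρX α s (KK p) = XK p α s ∧ ρX α s (EE p) = XE p α s ∧ ρX α s (FF p) = XF s

/-! ### The projective modules `P^α(s)` as matrix representations -/

/-- Index for the standard basis `(b_i, x_j, y_k, a_l)` of `P^α(s)`. -/
abbrev PIdx (p s : ℕ) := Fin s ⊕ (Fin (p - s) ⊕ (Fin (p - s) ⊕ Fin s))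

/-- Diagonal of the matrix of `K` on `P^α(s)`. -/
def PKdiag (p : ℕ) (α : ℂ) (s : ℕ) : PIdx p s → ℂ
  | .inl i => α * q p ^ ((s : ℤ) - 1 - 2 * (i : ℕ))
  | .inr (.inl j) => -α * q p ^ ((p : ℤ) - s - 1 - 2 * (j : ℕ))
  | .inr (.inr (.inl k)) => -α * q p ^ ((p : ℤ) - s - 1 - 2 * (k : ℕ))
  | .inr (.inr (.inr l)) => α * q p ^ ((s : ℤ) - 1 - 2 * (l : ℕ))

/-- Matrix of `K` on `P^α(s)` in the standard basis. -/
def PK (p : ℕ) (α : ℂ) (s : ℕ) : Matrix (PIdx p s) (PIdx p s) ℂ :=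
  Matrix.diagonal (PKdiag p α s)

/-- Matrix of `E` on `P^α(s)` in the standard basis. -/
def PE (p : ℕ) (α : ℂ) (s : ℕ) : Matrix (PIdx p s) (PIdx p s) ℂ :=
  Matrix.of fun i j =>
    match i, j with
    | .inl i, .inl j =>
        if (i : ℕ) + 1 = (j : ℕ) then α * qi p (j : ℕ) * qi p ((s : ℤ) - (j : ℕ)) else 0
    | .inr (.inl jx), .inl j => if (j : ℕ) = 0 ∧ (jx : ℕ) + 1 = p - s then 1 else 0
    | .inr (.inr (.inr l)), .inl j => if (l : ℕ) + 1 = (j : ℕ) then 1 else 0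
    | .inr (.inl i), .inr (.inl j) =>
        if (i : ℕ) + 1 = (j : ℕ) then -α * qi p (j : ℕ) * qi p ((p : ℤ) - s - (j : ℕ)) else 0
    | .inr (.inr (.inl i)), .inr (.inr (.inl k)) =>
        if (i : ℕ) + 1 = (k : ℕ) then -α * qi p (k : ℕ) * qi p ((p : ℤ) - s - (k : ℕ)) else 0
    | .inr (.inr (.inr l)), .inr (.inr (.inl k)) =>
        if (k : ℕ) = 0 ∧ (l : ℕ) + 1 = s then 1 else 0
    | .inr (.inr (.inr i)), .inr (.inr (.inr l)) =>
        if (i : ℕ) + 1 = (l : ℕ) then α * qi p (l : ℕ) * qi p ((s : ℤ) - (l : ℕ)) else 0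
    | _, _ => 0

/-- Matrix of `F` on `P^α(s)` in the standard basis. -/
def PF (p s : ℕ) : Matrix (PIdx p s) (PIdx p s) ℂ :=
  Matrix.of fun i j =>
    match i, j with
    | .inl i, .inl j => if (i : ℕ) = (j : ℕ) + 1 then (1 : ℂ) else 0
    | .inr (.inr (.inl k)), .inl j => if (j : ℕ) + 1 = s ∧ (k : ℕ) = 0 then 1 else 0
    | .inr (.inl i), .inr (.inl j) => if (i : ℕ) = (j : ℕ) + 1 then 1 else 0
    | .inr (.inr (.inr l)), .inr (.inl j) => if (j : ℕ) + 1 = p - s ∧ (l : ℕ) = 0 then 1 else 0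
    | .inr (.inr (.inl i)), .inr (.inr (.inl k)) => if (i : ℕ) = (k : ℕ) + 1 then 1 else 0
    | .inr (.inr (.inr i)), .inr (.inr (.inr l)) => if (i : ℕ) = (l : ℕ) + 1 then 1 else 0
    | _, _ => 0

/-- The statement that `ρP α s` is the representation on `P^α(s)` for the relevant
values of `α` and `s`. -/
def IsPRep (p : ℕ)
    (ρP : (α : ℂ) → (s : ℕ) → (Uq p →ₐ[ℂ] Matrix (PIdx p s) (PIdx p s) ℂ)) : Prop :=
  ∀ α : ℂ, (α = 1 ∨ α = -1) → ∀ s : ℕ, 1 ≤ s → s ≤ p - 1 →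
    ρP α s (KK p) = PK p α s ∧ ρP α s (EE p) = PE p α s ∧ ρP α s (FF p) = PF p s

/-! ### Symmetric linear forms, characters, and the forms `G_s` -/

/-- Symmetric linear forms. -/
def IsSLF (p : ℕ) (φ : Uq p →ₗ[ℂ] ℂ) : Prop := ∀ x y : Uq p, φ (x * y) = φ (y * x)

/-- The character of a matrix representation. -/
def chiOf (p : ℕ) {n : Type} [Fintype n] [DecidableEq n]
    (ρ : Uq p →ₐ[ℂ] Matrix n n ℂ) : Uq p →ₗ[ℂ] ℂ :=
  (Matrix.traceLinearMap n ℂ ℂ).comp ρ.toLinearMap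

/-- The matrix entry functional. -/
def entry {n : Type} (i j : n) : Matrix n n ℂ →ₗ[ℂ] ℂ where
  toFun M := M i j
  map_add' _ _ := rfl
  map_smul' _ _ := rfl

/-- The symmetric linear form `G_s = tr H^+_s + tr H^-_{p-s}`. -/
def GOf (p : ℕ)
    (ρP : (α : ℂ) → (s : ℕ) → (Uq p →ₐ[ℂ] Matrix (PIdx p s) (PIdx p s) ℂ))
    (s : ℕ) : Uq p →ₗ[ℂ] ℂ :=
  (∑ i : Fin s,
    (entry (Sum.inr (Sum.inr (Sum.inr i))) (Sum.inl i)).comp (ρP 1 s).toLinearMap) +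
  (∑ j : Fin (p - s),
    (entry (Sum.inr (Sum.inr (Sum.inr j))) (Sum.inl j)).comp (ρP (-1) (p - s)).toLinearMap)

/-! ### Convolution product -/

/-- The convolution product of two linear forms, with respect to a comultiplication `Δ`. -/
def conv (p : ℕ) (Δ : Uq p →ₐ[ℂ] (Uq p ⊗[ℂ] Uq p)) (φ ψ : Uq p →ₗ[ℂ] ℂ) :
    Uq p →ₗ[ℂ] ℂ :=
  (LinearMap.mul' ℂ ℂ).comp ((TensorProduct.map φ ψ).comp Δ.toLinearMap)

/-- The statement that `Δ` is the comultiplication of `Ū_q(sl₂)`. -/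
def IsCoprod (p : ℕ) (Δ : Uq p →ₐ[ℂ] (Uq p ⊗[ℂ] Uq p)) : Prop :=
  Δ (EE p) = 1 ⊗ₜ[ℂ] EE p + EE p ⊗ₜ[ℂ] KK p ∧
  Δ (FF p) = FF p ⊗ₜ[ℂ] 1 + KKinv p ⊗ₜ[ℂ] FF p ∧
  Δ (KK p) = KK p ⊗ₜ[ℂ] KK p ∧
  Δ (KKinv p) = KKinv p ⊗ₜ[ℂ] KKinv p

/-!
A form `φ` with `φ(Kx) = φ(xK)` kills the PBW monomials `F^a K^c E^b` with `a ≠ b`, and the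
remaining ones span the same space as the elements `C^n K^c`, where `C` is the Casimir element.
All identities can therefore be checked on `C^n K^c`. On `P^±` the Casimir element has Jordan
blocks of size two, so `G_s(C^n K^c)` is the `ε`-part of `(c_s + ε)^n` times the power sum of the
weights of `K`, with `c_s` the eigenvalue of `C`.

Convolution with the character of a representation `ρ` is the trace of the image of the coproduct
in `Mat_n(Ū_q)`. For `χ^-_1` this only changes signs. For `χ^+_2` the image of `C` is a matrix
annihilated by a quadratic polynomial whose roots, at the eigenvalue `c_s`, are `c_{s+1}` and
`c_{s-1}`. Over the dual numbers the roots at `c_s + [s]ε` are `c_{s±1} + [s±1]ε`, which gives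
`[s] χ^+_2 G_s = [s-1] G_{s-1} + [s+1] G_{s+1}`. In particular `λ_s = δ_s = 0`.
-/

/-! ### The parameter `q` and the `q`-integers -/

section qInteger

variable {p : ℕ}

theorem isPrimitiveRoot_q (hp : 2 ≤ p) : IsPrimitiveRoot (q p) (2 * p) := by
  have hp0 : (p : ℂ) ≠ 0 := Nat.cast_ne_zero.2 (by omega)
  convert Complex.isPrimitiveRoot_exp (2 * p) (by omega) using 1
  rw [q]
  congr 1
  push_cast
  field_simp

theorem q_ne_zero (p : ℕ) : q p ≠ 0 := Complex.exp_ne_zero _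

theorem q_pow_p (hp : 2 ≤ p) : q p ^ p = -1 := by
  have hp0 : (p : ℂ) ≠ 0 := Nat.cast_ne_zero.2 (by omega)
  rw [q, ← Complex.exp_nat_mul, mul_div_cancel₀ _ hp0, Complex.exp_pi_mul_I]

theorem isPrimitiveRoot_q_sq (hp : 2 ≤ p) : IsPrimitiveRoot (q p ^ 2) p :=
  (isPrimitiveRoot_q hp).pow (by omega) rfl

theorem q_sub_inv_ne_zero (hp : 2 ≤ p) : q p - (q p)⁻¹ ≠ 0 := by
  intro h
  refine (isPrimitiveRoot_q_sq hp).ne_one (by omega) ?_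
  rw [sq, mul_eq_one_iff_eq_inv₀ (q_ne_zero p)]
  exact sub_eq_zero.1 h

@[simp] theorem qi_zero (p : ℕ) : qi p 0 = 0 := by simp [qi]

theorem qi_one (hp : 2 ≤ p) : qi p 1 = 1 := by
  simp [qi, q_sub_inv_ne_zero hp]

theorem qi_p (hp : 2 ≤ p) : qi p p = 0 := by
  simp [qi, q_pow_p hp, inv_neg]

theorem qi_ne_zero (hp : 2 ≤ p) {s : ℕ} (hs : 1 ≤ s) (hsp : s < p) : qi p s ≠ 0 := by
  refine div_ne_zero (fun h => ?_) (q_sub_inv_ne_zero hp)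
  refine (isPrimitiveRoot_q_sq hp).pow_ne_one_of_pos_of_lt (by omega) hsp ?_
  rw [zpow_neg, zpow_natCast, sub_eq_zero] at h
  rw [← pow_mul, mul_comm, pow_mul, sq, mul_eq_one_iff_eq_inv₀ (pow_ne_zero _ (q_ne_zero p))]
  exact h

end qInteger

/-! ### The algebra `Ū_q` and its Casimir element -/

section Casimir

variable {p : ℕ}

theorem KK_mul_KKinv : KK p * KKinv p = 1 := by
  simpa [KK, KKinv] using RingQuot.mkAlgHom_rel ℂ (rel.KKinv (p := p))

theorem KKinv_mul_KK : KKinv p * KK p = 1 := by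
  simpa [KK, KKinv] using RingQuot.mkAlgHom_rel ℂ (rel.KinvK (p := p))

theorem EE_pow_p : EE p ^ p = 0 := by
  simpa [EE] using RingQuot.mkAlgHom_rel ℂ (rel.Ep (p := p))

theorem FF_pow_p : FF p ^ p = 0 := by
  simpa [FF] using RingQuot.mkAlgHom_rel ℂ (rel.Fp (p := p))

theorem KK_pow_two_mul_p : KK p ^ (2 * p) = 1 := by
  simpa [KK] using RingQuot.mkAlgHom_rel ℂ (rel.K2p (p := p))

theorem KK_mul_EE : KK p * EE p = q p ^ 2 • (EE p * KK p) := by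
  simpa [KK, EE] using RingQuot.mkAlgHom_rel ℂ (rel.KE (p := p))

theorem KK_mul_FF : KK p * FF p = (q p ^ 2)⁻¹ • (FF p * KK p) := by
  simpa [KK, FF] using RingQuot.mkAlgHom_rel ℂ (rel.KF (p := p))

theorem EE_mul_FF :
    EE p * FF p = FF p * EE p + (q p - (q p)⁻¹)⁻¹ • (KK p - KKinv p) := by
  rw [← sub_eq_iff_eq_add']
  simpa [KK, KKinv, EE, FF] using RingQuot.mkAlgHom_rel ℂ (rel.EF (p := p))

theorem KKinv_eq_pow (hp : 2 ≤ p) : KKinv p = KK p ^ (2 * p - 1) := by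
  refine left_inv_eq_right_inv KKinv_mul_KK ?_
  rw [← pow_succ', show 2 * p - 1 + 1 = 2 * p by omega, KK_pow_two_mul_p]

theorem EE_mul_KK : EE p * KK p = (q p ^ 2)⁻¹ • (KK p * EE p) := by
  rw [KK_mul_EE, inv_smul_smul₀ (pow_ne_zero 2 (q_ne_zero p))]

theorem FF_mul_KK : FF p * KK p = q p ^ 2 • (KK p * FF p) := by
  rw [KK_mul_FF, smul_inv_smul₀ (pow_ne_zero 2 (q_ne_zero p))]

theorem mul_eq_smul_mul_of_inverse {R A : Type*} [CommSemiring R] [Semiring A] [Algebra R A]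
    {k k' x : A} {r : R} (hkk' : k * k' = 1) (hk'k : k' * k = 1) (h : k * x = r • (x * k)) :
    x * k' = r • (k' * x) :=
  calc x * k' = k' * (k * x) * k' := by rw [← mul_assoc, hk'k, one_mul]
    _ = r • (k' * x) := by
      rw [h, mul_smul_comm, smul_mul_assoc, ← mul_assoc, mul_assoc, hkk', mul_one]

theorem EE_mul_KKinv : EE p * KKinv p = q p ^ 2 • (KKinv p * EE p) :=
  mul_eq_smul_mul_of_inverse KK_mul_KKinv KKinv_mul_KK KK_mul_EE

theorem FF_mul_KKinv : FF p * KKinv p = (q p ^ 2)⁻¹ • (KKinv p * FF p) :=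
  mul_eq_smul_mul_of_inverse KK_mul_KKinv KKinv_mul_KK KK_mul_FF

/-- The Casimir element `C = FE + (qK + q⁻¹K⁻¹)/(q - q⁻¹)²` of `Ū_q`. -/
def casimir (p : ℕ) : Uq p :=
  FF p * EE p + ((q p - (q p)⁻¹) ^ 2)⁻¹ • (q p • KK p + (q p)⁻¹ • KKinv p)

theorem FF_mul_EE_eq : FF p * EE p =
    casimir p - ((q p - (q p)⁻¹) ^ 2)⁻¹ • (q p • KK p + (q p)⁻¹ • KKinv p) := by
  rw [casimir, add_sub_cancel_right]

theorem casimir_eq_EE_mul_FF : casimir p =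
    EE p * FF p + ((q p - (q p)⁻¹) ^ 2)⁻¹ • ((q p)⁻¹ • KK p + q p • KKinv p) := by
  have hd : ((q p - (q p)⁻¹) ^ 2)⁻¹ * (q p - (q p)⁻¹) = (q p - (q p)⁻¹)⁻¹ := by
    grind
  rw [casimir, EE_mul_FF, ← hd]
  module

theorem commute_KK_casimir : Commute (KK p) (casimir p) := by
  have hFE : KK p * (FF p * EE p) = FF p * EE p * KK p := by
    rw [mul_assoc, EE_mul_KK, mul_smul_comm, ← mul_assoc, KK_mul_FF, smul_mul_assoc, mul_assoc]
  rw [Commute, SemiconjBy]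
  simp only [casimir, mul_add, add_mul, hFE, mul_smul_comm, smul_mul_assoc, KK_mul_KKinv,
    KKinv_mul_KK]

theorem commute_EE_casimir : Commute (EE p) (casimir p) := by
  have hq := q_ne_zero p
  calc EE p * casimir p
      = EE p * FF p * EE p + ((q p - (q p)⁻¹) ^ 2)⁻¹ •
          ((q p)⁻¹ • (KK p * EE p) + q p • (KKinv p * EE p)) := by
        rw [casimir, mul_add, mul_assoc, mul_smul_comm, mul_add, mul_smul_comm, mul_smul_comm,
          EE_mul_KK, EE_mul_KKinv]
        match_scalars <;> field_simp
    _ = casimir p * EE p := by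
        rw [casimir_eq_EE_mul_FF]
        simp only [add_mul, smul_mul_assoc]

theorem commute_FF_casimir : Commute (FF p) (casimir p) := by
  have hq := q_ne_zero p
  calc FF p * casimir p
      = FF p * EE p * FF p + ((q p - (q p)⁻¹) ^ 2)⁻¹ •
          (q p • (KK p * FF p) + (q p)⁻¹ • (KKinv p * FF p)) := by
        rw [casimir_eq_EE_mul_FF, mul_add, mul_assoc, mul_smul_comm, mul_add, mul_smul_comm,
          mul_smul_comm, FF_mul_KK, FF_mul_KKinv]
        match_scalars <;> field_simp
    _ = casimir p * FF p := by simp only [casimir, add_mul, smul_mul_assoc]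

end Casimir

/-! ### Forms invariant under conjugation by `K` -/

section PBW

variable {p : ℕ}

/-- The Poincaré–Birkhoff–Witt monomial `F^a K^c E^b`. -/
def pbw (p a c b : ℕ) : Uq p := FF p ^ a * KK p ^ c * EE p ^ b

theorem KK_mul_FF_pow (a : ℕ) : KK p * FF p ^ a = (q p ^ 2)⁻¹ ^ a • (FF p ^ a * KK p) := by
  have h : SemiconjBy (KK p) (FF p) ((q p ^ 2)⁻¹ • FF p) :=
    KK_mul_FF.trans (smul_mul_assoc _ _ _).symm
  simpa only [smul_pow, smul_mul_assoc] using (h.pow_right a).eq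

theorem KK_mul_EE_pow (b : ℕ) : KK p * EE p ^ b = (q p ^ 2) ^ b • (EE p ^ b * KK p) := by
  have h : SemiconjBy (KK p) (EE p) (q p ^ 2 • EE p) :=
    KK_mul_EE.trans (smul_mul_assoc _ _ _).symm
  simpa only [smul_pow, smul_mul_assoc] using (h.pow_right b).eq

theorem EE_mul_KK_pow (c : ℕ) : EE p * KK p ^ c = (q p ^ 2)⁻¹ ^ c • (KK p ^ c * EE p) := by
  have h : SemiconjBy (EE p) (KK p) ((q p ^ 2)⁻¹ • KK p) :=
    EE_mul_KK.trans (smul_mul_assoc _ _ _).symm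
  simpa only [smul_pow, smul_mul_assoc] using (h.pow_right c).eq

theorem FF_mul_KK_pow (c : ℕ) : FF p * KK p ^ c = (q p ^ 2) ^ c • (KK p ^ c * FF p) := by
  have h : SemiconjBy (FF p) (KK p) (q p ^ 2 • KK p) :=
    FF_mul_KK.trans (smul_mul_assoc _ _ _).symm
  simpa only [smul_pow, smul_mul_assoc] using (h.pow_right c).eq

theorem KK_mul_pbw (a c b : ℕ) :
    KK p * pbw p a c b = (q p ^ 2)⁻¹ ^ a • pbw p a (c + 1) b := by
  simp only [pbw, ← mul_assoc, KK_mul_FF_pow, smul_mul_assoc, pow_succ' (KK p)]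

theorem pbw_mul_KK (a c b : ℕ) :
    pbw p a c b * KK p = (q p ^ 2)⁻¹ ^ b • pbw p a (c + 1) b := by
  have h : EE p ^ b * KK p = (q p ^ 2)⁻¹ ^ b • (KK p * EE p ^ b) := by
    rw [KK_mul_EE_pow, inv_pow, inv_smul_smul₀ (pow_ne_zero _ (pow_ne_zero 2 (q_ne_zero p)))]
  simp only [pbw, mul_assoc, h, mul_smul_comm, pow_succ (KK p)]

theorem Uq_submodule_eq_top {V : Submodule ℂ (Uq p)} (hp : 2 ≤ p) (hone : 1 ∈ V)
    (hE : ∀ x ∈ V, EE p * x ∈ V) (hF : ∀ x ∈ V, FF p * x ∈ V) (hK : ∀ x ∈ V, KK p * x ∈ V) :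
    V = ⊤ := by
  have hKpow : ∀ n, ∀ x ∈ V, KK p ^ n * x ∈ V := by
    intro n
    induction n with
    | zero => simp
    | succ n ih => intro x hx; rw [pow_succ, mul_assoc]; exact ih _ (hK x hx)
  have hmul : ∀ y, ∀ x ∈ V, RingQuot.mkAlgHom ℂ (rel p) y * x ∈ V := by
    intro y
    induction y using FreeAlgebra.induction with
    | grade0 r =>
      intro x hx
      rw [AlgHom.commutes, ← Algebra.smul_def]
      exact V.smul_mem r hx
    | grade1 g =>
      cases g with
      | E => exact hE
      | F => exact hF
      | K => exact hK
      | Kinv =>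
        change ∀ x ∈ V, KKinv p * x ∈ V
        rw [KKinv_eq_pow hp]
        exact hKpow _
    | mul a b ha hb =>
      intro x hx
      rw [map_mul, mul_assoc]
      exact ha _ (hb x hx)
    | add a b ha hb =>
      intro x hx
      rw [map_add, add_mul]
      exact V.add_mem (ha x hx) (hb x hx)
  refine Submodule.eq_top_iff'.2 fun u => ?_
  obtain ⟨y, rfl⟩ := RingQuot.mkAlgHom_surjective ℂ (rel p) u
  simpa using hmul y 1 hone

theorem mul_mem_span_of_generators {R A : Type*} [CommSemiring R] [Semiring A] [Algebra R A]
    {S : Set A} {u x : A} (hS : ∀ y ∈ S, u * y ∈ Submodule.span R S)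
    (hx : x ∈ Submodule.span R S) : u * x ∈ Submodule.span R S :=
  (Submodule.span_le (p := (Submodule.span R S).comap (LinearMap.mulLeft R u))).2 hS hx

theorem span_pbw_eq_top (hp : 2 ≤ p) :
    Submodule.span ℂ {x | ∃ a c b, pbw p a c b = x} = ⊤ := by
  set V := Submodule.span ℂ {x | ∃ a c b, pbw p a c b = x}
  have hmem (a c b : ℕ) : pbw p a c b ∈ V := Submodule.subset_span ⟨a, c, b, rfl⟩
  have hF : ∀ x ∈ V, FF p * x ∈ V := fun x => mul_mem_span_of_generators <| by
    rintro _ ⟨a, c, b, rfl⟩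
    have h : FF p * pbw p a c b = pbw p (a + 1) c b := by
      simp only [pbw, pow_succ', mul_assoc]
    rw [h]
    exact hmem (a + 1) c b
  have hK : ∀ x ∈ V, KK p * x ∈ V := fun x => mul_mem_span_of_generators <| by
    rintro _ ⟨a, c, b, rfl⟩
    rw [KK_mul_pbw]
    exact V.smul_mem _ (hmem a (c + 1) b)
  have hKinv (a c b : ℕ) : KKinv p * pbw p a c b ∈ V := by
    rw [KKinv_eq_pow hp]
    generalize 2 * p - 1 = n
    induction n with
    | zero => simpa using hmem a c b
    | succ n ih => rw [pow_succ', mul_assoc]; exact hK _ ih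
  have hE : ∀ x ∈ V, EE p * x ∈ V := fun x => mul_mem_span_of_generators <| by
    rintro _ ⟨a, c, b, rfl⟩
    induction a with
    | zero =>
      have h : EE p * pbw p 0 c b = (q p ^ 2)⁻¹ ^ c • pbw p 0 c (b + 1) := by
        simp only [pbw, pow_zero, one_mul, ← mul_assoc, EE_mul_KK_pow, smul_mul_assoc, pow_succ']
      rw [h]
      exact V.smul_mem _ (hmem 0 c (b + 1))
    | succ a ih =>
      have h : EE p * pbw p (a + 1) c b = FF p * (EE p * pbw p a c b) +
          (q p - (q p)⁻¹)⁻¹ • (KK p * pbw p a c b - KKinv p * pbw p a c b) := by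
        simp only [pbw, pow_succ' (FF p), mul_assoc]
        rw [← mul_assoc (EE p), EE_mul_FF, add_mul, smul_mul_assoc, sub_mul, mul_assoc]
      rw [h]
      exact V.add_mem (hF _ ih) (V.smul_mem _ (V.sub_mem (hK _ (hmem a c b)) (hKinv a c b)))
  exact Uq_submodule_eq_top hp (by simpa [pbw] using hmem 0 0 0) hE hF hK

/-- The span of the elements `C^n K^c`, which is the part of `Ū_q` commuting with `K`. -/
def casimirTorusSpan (p : ℕ) : Submodule ℂ (Uq p) :=
  Submodule.span ℂ {x | ∃ n c, casimir p ^ n * KK p ^ c = x}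

theorem FF_mul_mul_EE_mem_casimirTorusSpan (hp : 2 ≤ p) {y : Uq p}
    (hy : y ∈ casimirTorusSpan p) : FF p * y * EE p ∈ casimirTorusSpan p := by
  have hmem (n c : ℕ) : casimir p ^ n * KK p ^ c ∈ casimirTorusSpan p :=
    Submodule.subset_span ⟨n, c, rfl⟩
  suffices casimirTorusSpan p ≤ (casimirTorusSpan p).comap
      (LinearMap.mulRight ℂ (EE p) ∘ₗ LinearMap.mulLeft ℂ (FF p)) from this hy
  refine Submodule.span_le.2 ?_
  rintro _ ⟨n, c, rfl⟩
  have hFKE : FF p * (casimir p ^ n * KK p ^ c) * EE p =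
      (q p ^ 2) ^ c • (casimir p ^ n * KK p ^ c * (FF p * EE p)) := by
    rw [← mul_assoc (FF p), (commute_FF_casimir.pow_right n).eq, mul_assoc (casimir p ^ n),
      FF_mul_KK_pow]
    simp only [mul_smul_comm, smul_mul_assoc, mul_assoc]
  have hC : casimir p ^ n * KK p ^ c * casimir p = casimir p ^ (n + 1) * KK p ^ c := by
    rw [mul_assoc, (commute_KK_casimir.pow_left c).eq, ← mul_assoc, pow_succ]
  change FF p * (casimir p ^ n * KK p ^ c) * EE p ∈ casimirTorusSpan p
  rw [hFKE, FF_mul_EE_eq, KKinv_eq_pow hp]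
  simp only [mul_sub, mul_add, mul_smul_comm, hC]
  simp only [mul_assoc, ← pow_add, ← pow_succ]
  exact Submodule.smul_mem _ _ <| Submodule.sub_mem _ (hmem _ _) <| Submodule.smul_mem _ _ <|
    Submodule.add_mem _ (Submodule.smul_mem _ _ (hmem _ _)) (Submodule.smul_mem _ _ (hmem _ _))

theorem pbw_self_mem_casimirTorusSpan (hp : 2 ≤ p) (a c : ℕ) :
    pbw p a c a ∈ casimirTorusSpan p := by
  induction a with
  | zero => exact Submodule.subset_span ⟨0, c, by simp [pbw]⟩
  | succ a ih =>
    simpa only [pbw, pow_succ' (FF p), pow_succ (EE p), mul_assoc] using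
      FF_mul_mul_EE_mem_casimirTorusSpan hp ih

/-- The linear forms `φ` with `φ(Kx) = φ(xK)`, among which are all symmetric linear forms. -/
def torusInvariantForms (p : ℕ) : Submodule ℂ (Uq p →ₗ[ℂ] ℂ) where
  carrier := {φ | ∀ x, φ (KK p * x) = φ (x * KK p)}
  add_mem' hφ hψ x := by simp [hφ x, hψ x]
  zero_mem' _ := rfl
  smul_mem' r φ hφ x := by simp [hφ x]

theorem apply_pbw_eq_zero (hp : 2 ≤ p) {φ : Uq p →ₗ[ℂ] ℂ} (hφ : φ ∈ torusInvariantForms p)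
    {a b : ℕ} (hab : a ≠ b) (c : ℕ) : φ (pbw p a c b) = 0 := by
  rcases le_or_gt p a with ha | ha
  · simp [pbw, pow_eq_zero_of_le ha FF_pow_p]
  rcases le_or_gt p b with hb | hb
  · simp [pbw, pow_eq_zero_of_le hb EE_pow_p]
  have hweight : (q p ^ 2)⁻¹ ^ a ≠ (q p ^ 2)⁻¹ ^ b := fun h =>
    hab ((isPrimitiveRoot_q_sq hp).inv.pow_inj ha hb h)
  have hsucc (c : ℕ) : φ (pbw p a (c + 1) b) = 0 := by
    have h := hφ (pbw p a c b)
    rw [KK_mul_pbw, pbw_mul_KK, map_smul, map_smul] at h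
    exact (mul_eq_mul_right_iff.1 h).resolve_left hweight
  have hperiod : pbw p a c b = pbw p a (2 * p - 1 + c + 1) b := by
    rw [pbw, pbw, show 2 * p - 1 + c + 1 = 2 * p + c by omega, pow_add, KK_pow_two_mul_p, one_mul]
  rw [hperiod, hsucc]

theorem torusInvariantForms_ext (hp : 2 ≤ p) {φ ψ : Uq p →ₗ[ℂ] ℂ}
    (hφ : φ ∈ torusInvariantForms p) (hψ : ψ ∈ torusInvariantForms p)
    (h : ∀ n c, φ (casimir p ^ n * KK p ^ c) = ψ (casimir p ^ n * KK p ^ c)) : φ = ψ := by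
  refine LinearMap.ext_on (span_pbw_eq_top hp) ?_
  rintro _ ⟨a, c, b, rfl⟩
  rcases eq_or_ne a b with rfl | hab
  · refine LinearMap.eqOn_span ?_ (pbw_self_mem_casimirTorusSpan hp a c)
    rintro _ ⟨n, c, rfl⟩
    exact h n c
  · rw [apply_pbw_eq_zero hp hφ hab, apply_pbw_eq_zero hp hψ hab]

end PBW

/-! ### Casimir eigenvalues and weight sums -/

section CasimirEigenvalue

variable {p : ℕ}

/-- The scalar `(q^m + q^(-m))/(q - q⁻¹)²` by which the Casimir element acts on `X^+(m)`. -/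
def casimirEigenvalue (p : ℕ) (m : ℤ) : ℂ := (q p ^ m + q p ^ (-m)) / (q p - (q p)⁻¹) ^ 2

theorem qi_add_one_add_qi_sub_one (s : ℤ) :
    qi p (s + 1) + qi p (s - 1) = (q p + (q p)⁻¹) * qi p s := by
  have hq := q_ne_zero p
  have hs := zpow_ne_zero s hq
  simp only [qi, zpow_add₀ hq, zpow_sub₀ hq, zpow_neg, zpow_one]
  field_simp
  ring

theorem casimirEigenvalue_add_one_add_sub_one (s : ℤ) :
    casimirEigenvalue p (s + 1) + casimirEigenvalue p (s - 1) =
      (q p + (q p)⁻¹) * casimirEigenvalue p s := by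
  have hq := q_ne_zero p
  have hs := zpow_ne_zero s hq
  simp only [casimirEigenvalue, zpow_add₀ hq, zpow_sub₀ hq, zpow_neg, zpow_one]
  field_simp
  ring

theorem casimirEigenvalue_add_one_mul_sub_one (hp : 2 ≤ p) (s : ℤ) :
    casimirEigenvalue p (s + 1) * casimirEigenvalue p (s - 1) =
      casimirEigenvalue p s ^ 2 + ((q p - (q p)⁻¹) ^ 2)⁻¹ := by
  have hq := q_ne_zero p
  have hs := zpow_ne_zero s hq
  have hd := q_sub_inv_ne_zero hp
  rw [← mul_left_inj' (pow_ne_zero 4 hd)]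
  simp only [casimirEigenvalue, zpow_add₀ hq, zpow_sub₀ hq, zpow_neg, zpow_one]
  field_simp
  ring

theorem casimirEigenvalue_mul_qi (s : ℤ) :
    casimirEigenvalue p (s + 1) * qi p (s - 1) + qi p (s + 1) * casimirEigenvalue p (s - 1) =
      2 * (casimirEigenvalue p s * qi p s) := by
  have hq := q_ne_zero p
  have hs := zpow_ne_zero s hq
  simp only [casimirEigenvalue, qi, zpow_add₀ hq, zpow_sub₀ hq, zpow_neg, zpow_one]
  field_simp
  ring

theorem casimirEigenvalue_p_sub (hp : 2 ≤ p) (s : ℤ) :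
    casimirEigenvalue p (p - s) = -casimirEigenvalue p s := by
  have hq := q_ne_zero p
  have hs := zpow_ne_zero s hq
  simp only [casimirEigenvalue, zpow_sub₀ hq, zpow_neg, zpow_natCast, q_pow_p hp]
  field_simp
  ring

theorem qi_mul_qi_add_torus_eq_casimirEigenvalue (hp : 2 ≤ p) (s j : ℤ) :
    qi p j * qi p (s - j) + ((q p - (q p)⁻¹) ^ 2)⁻¹ *
      (q p * q p ^ (s - 1 - 2 * j) + (q p)⁻¹ * (q p ^ (s - 1 - 2 * j))⁻¹) =
      casimirEigenvalue p s := by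
  have hq := q_ne_zero p
  have hd := q_sub_inv_ne_zero hp
  have hs := zpow_ne_zero s hq
  have hj := zpow_ne_zero j hq
  simp only [casimirEigenvalue, qi, two_mul, zpow_add₀ hq, zpow_sub₀ hq, zpow_neg, zpow_one]
  generalize q p - (q p)⁻¹ = d at hd
  field_simp
  ring

/-- The trace of `K^c` on `X^+(s) ⊕ X^-(p-s)`, written as one sum so that it makes sense for every
integer `s`. -/
def weightSum (p : ℕ) (s : ℤ) (c : ℕ) : ℂ :=
  ∑ i ∈ Finset.range p, (q p ^ (s - 1 - 2 * (i : ℤ))) ^ c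

theorem weightSum_add (s k : ℤ) (c : ℕ) :
    weightSum p (s + k) c = (q p ^ k) ^ c * weightSum p s c := by
  rw [weightSum, weightSum, Finset.mul_sum]
  refine Finset.sum_congr rfl fun i _ => ?_
  rw [← mul_pow, ← zpow_add₀ (q_ne_zero p)]
  congr 2
  ring

theorem weightSum_periodic (hp : 2 ≤ p) (c : ℕ) :
    Function.Periodic (fun s => weightSum p s c) 2 := by
  intro s
  have h := (Finset.sum_range_succ (fun i : ℕ => (q p ^ (s + 1 - 2 * (i : ℤ))) ^ c) p).symm.trans
    (Finset.sum_range_succ' _ p)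
  have hends : q p ^ (s + 1 - 2 * (p : ℤ)) = q p ^ (s + 1 - 2 * ((0 : ℕ) : ℤ)) := by
    rw [zpow_sub₀ (q_ne_zero p), mul_comm, zpow_mul, zpow_natCast, q_pow_p hp]
    simp
  rw [hends, add_left_inj] at h
  simp only [weightSum]
  convert h using 4 <;> push_cast <;> ring

theorem weightSum_mul_inv_q_pow (hp : 2 ≤ p) (s : ℤ) (c : ℕ) :
    weightSum p s c * (q p ^ c)⁻¹ = weightSum p s c * q p ^ c := by
  calc weightSum p s c * (q p ^ c)⁻¹ = weightSum p (s + -1) c := by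
        rw [weightSum_add, zpow_neg_one, inv_pow, mul_comm]
    _ = weightSum p (s + 1) c := by
        simpa [add_assoc] using (weightSum_periodic hp c (s + -1)).symm
    _ = weightSum p s c * q p ^ c := by rw [weightSum_add, zpow_one, mul_comm]

theorem weightSum_add_one (s : ℤ) (c : ℕ) :
    weightSum p (s + 1) c = q p ^ c * weightSum p s c := by
  rw [weightSum_add, zpow_one]

theorem weightSum_sub_one (hp : 2 ≤ p) (s : ℤ) (c : ℕ) :
    weightSum p (s - 1) c = q p ^ c * weightSum p s c := by
  rw [sub_eq_add_neg, weightSum_add, zpow_neg_one, inv_pow, mul_comm, weightSum_mul_inv_q_pow hp,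
    mul_comm]

theorem weightSum_p_sub (hp : 2 ≤ p) (s : ℤ) (c : ℕ) :
    weightSum p (p - s) c = (-1) ^ c * weightSum p s c := by
  have h : weightSum p (-s) c = weightSum p s c := by
    simpa [show s - s * 2 = -s by ring] using (weightSum_periodic hp c).sub_zsmul_eq (x := s) s
  rw [sub_eq_neg_add, weightSum_add, zpow_natCast, q_pow_p hp, h]

theorem weightSum_eq_add (hp : 2 ≤ p) {s : ℕ} (hsp : s ≤ p) (c : ℕ) :
    weightSum p s c = (∑ j : Fin s, (1 * q p ^ ((s : ℤ) - 1 - 2 * (j : ℕ))) ^ c) +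
      ∑ j : Fin (p - s), (-1 * q p ^ (((p - s : ℕ) : ℤ) - 1 - 2 * (j : ℕ))) ^ c := by
  obtain ⟨t, rfl⟩ := Nat.exists_eq_add_of_le hsp
  have hq := q_ne_zero (s + t)
  have hshift (j : ℕ) : -1 * q (s + t) ^ ((t : ℤ) - 1 - 2 * j) =
      q (s + t) ^ ((s : ℤ) - 1 - 2 * (s + j : ℕ)) := by
    have h : -1 * q (s + t) ^ ((s + t : ℕ) : ℤ) = 1 := by rw [zpow_natCast, q_pow_p hp]; simp
    rw [show (t : ℤ) - 1 - 2 * j = (s + t : ℕ) + (s - 1 - 2 * (s + j : ℕ)) by push_cast; ring,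
      zpow_add₀ hq, ← mul_assoc, h, one_mul]
  simp only [one_mul, Nat.add_sub_cancel_left, hshift]
  rw [Fin.sum_univ_eq_sum_range (fun j : ℕ => (q (s + t) ^ ((s : ℤ) - 1 - 2 * (j : ℤ))) ^ c),
    Fin.sum_univ_eq_sum_range
      (fun j : ℕ => (q (s + t) ^ ((s : ℤ) - 1 - 2 * ((s + j : ℕ) : ℤ))) ^ c),
    weightSum, Finset.sum_range_add, Nat.add_sub_cancel_left]

end CasimirEigenvalue

/-! ### Dual numbers -/

section DualNumber

variable {R : Type*} [CommRing R]

/-- The dual number `a + bε`; the `ε`-part of a polynomial in `a + ε` is its derivative at `a`. -/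
def dual (a b : R) : DualNumber R := .inl a + .inr b

@[simp] theorem fst_dual (a b : R) : (dual a b).fst = a := by simp [dual]

@[simp] theorem snd_dual (a b : R) : (dual a b).snd = b := by simp [dual]

theorem snd_dual_pow (a b : R) (n : ℕ) : (dual a b ^ n).snd = b * (dual a 1 ^ n).snd := by
  simp only [TrivSqZeroExt.snd_pow, fst_dual, snd_dual, smul_eq_mul, nsmul_eq_mul]
  ring

theorem snd_dual_neg_pow (a : R) (n : ℕ) :
    (dual (-a) 1 ^ n).snd = -(-1) ^ n * (dual a 1 ^ n).snd := by
  have h : dual (-a) 1 = (-1 : R) • dual a (-1) := by ext <;> simp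
  rw [h, smul_pow, TrivSqZeroExt.snd_smul, snd_dual_pow, smul_eq_mul]
  ring

theorem pow_mulVec_of_jordan_chain {n : Type*} [Fintype n] [DecidableEq n] {M : Matrix n n R}
    {μ : R} {v w : n → R} (hv : M.mulVec v = μ • v + w) (hw : M.mulVec w = μ • w) (k : ℕ) :
    (M ^ k).mulVec v = (dual μ 1 ^ k).fst • v + (dual μ 1 ^ k).snd • w := by
  induction k with
  | zero => simp
  | succ k ih =>
    rw [pow_succ', ← Matrix.mulVec_mulVec, ih, Matrix.mulVec_add, Matrix.mulVec_smul,
      Matrix.mulVec_smul, hv, hw, pow_succ']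
    simp only [TrivSqZeroExt.fst_mul, TrivSqZeroExt.snd_mul, fst_dual, snd_dual, smul_eq_mul,
      MulOpposite.smul_eq_mul_unop, MulOpposite.unop_op]
    module

end DualNumber

/-! ### The forms `G_s` on the elements `C^n K^c` -/

section Projective

open scoped Matrix

variable {p : ℕ}

theorem map_KKinv_eq_diagonal {n : Type} [Fintype n] [DecidableEq n]
    {ρ : Uq p →ₐ[ℂ] Matrix n n ℂ} {D : n → ℂ} (h : ρ (KK p) = Matrix.diagonal D) :
    ρ (KKinv p) = Matrix.diagonal D⁻¹ := by
  have hinv : Matrix.diagonal D * ρ (KKinv p) = 1 := by rw [← h, ← map_mul, KK_mul_KKinv, map_one]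
  have hD (i : n) : D i ≠ 0 := by
    intro hi
    simpa [Matrix.diagonal_mul, hi] using congrFun₂ hinv i i
  refine (left_inv_eq_right_inv ?_ hinv).symm
  simp [Matrix.diagonal_mul_diagonal, hD]

theorem entry_comp_mem_torusInvariantForms {n : Type} [Fintype n] [DecidableEq n]
    {ρ : Uq p →ₐ[ℂ] Matrix n n ℂ} {D : n → ℂ} (h : ρ (KK p) = Matrix.diagonal D) {i j : n}
    (hij : D i = D j) : (entry i j).comp ρ.toLinearMap ∈ torusInvariantForms p := by
  intro x
  change ρ (KK p * x) i j = ρ (x * KK p) i j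
  rw [map_mul, map_mul, h, Matrix.diagonal_mul, Matrix.mul_diagonal, hij, mul_comm]

theorem chiOf_mem_torusInvariantForms {n : Type} [Fintype n] [DecidableEq n]
    (ρ : Uq p →ₐ[ℂ] Matrix n n ℂ) : chiOf p ρ ∈ torusInvariantForms p := by
  intro x
  simp only [chiOf, LinearMap.comp_apply, AlgHom.toLinearMap_apply, map_mul,
    Matrix.traceLinearMap_apply]
  exact Matrix.trace_mul_comm _ _

/-- The basis vector `b_i` of `P^α(s)`. -/
abbrev bVec (p : ℕ) {s : ℕ} (i : Fin s) : PIdx p s → ℂ := Pi.single (.inl i) 1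

/-- The basis vector `a_l` of `P^α(s)`. -/
abbrev aVec (p : ℕ) {s : ℕ} (l : Fin s) : PIdx p s → ℂ := Pi.single (.inr (.inr (.inr l))) 1

theorem PF_mulVec_PE_mulVec_bVec (α : ℂ) {s : ℕ} (hsp : s < p) (j : Fin s) :
    PF p s *ᵥ PE p α s *ᵥ bVec p j =
      (α * (qi p (j : ℕ) * qi p (s - (j : ℕ)))) • bVec p j + aVec p j := by
  obtain ⟨_ | j, hj⟩ := j
  -- `E b₀ = x_{p-s-1}` and `F x_{p-s-1} = a₀`: the detour through the `x_j` produces `a₀`.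
  · have hE : PE p α s *ᵥ bVec p ⟨0, hj⟩ = Pi.single (.inr (.inl ⟨p - s - 1, by omega⟩)) 1 := by
      rw [Matrix.mulVec_single_one]
      ext (i | i | i | i) <;> simp [PE, Matrix.col, Pi.single_apply, Fin.ext_iff]
      grind
    have hF : PF p s *ᵥ Pi.single (.inr (.inl ⟨p - s - 1, by omega⟩)) 1 = aVec p ⟨0, hj⟩ := by
      rw [Matrix.mulVec_single_one]
      ext (i | i | i | i) <;> simp [PF, Matrix.col, Pi.single_apply, Fin.ext_iff]
      all_goals grind
    simp [hE, hF]
  · have hE : PE p α s *ᵥ bVec p ⟨j + 1, hj⟩ =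
        (α * qi p (j + 1 : ℕ) * qi p (s - (j + 1 : ℕ))) • bVec p ⟨j, by omega⟩ +
          aVec p ⟨j, by omega⟩ := by
      rw [Matrix.mulVec_single_one]
      ext (i | i | i | i) <;> simp [PE, Matrix.col, Pi.single_apply, Fin.ext_iff]
    have hFb : PF p s *ᵥ bVec p ⟨j, by omega⟩ = bVec p ⟨j + 1, hj⟩ := by
      rw [Matrix.mulVec_single_one]
      ext (i | i | i | i) <;> simp [PF, Matrix.col, Pi.single_apply, Fin.ext_iff]
      omega
    have hFa : PF p s *ᵥ aVec p ⟨j, by omega⟩ = aVec p ⟨j + 1, hj⟩ := by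
      rw [Matrix.mulVec_single_one]
      ext (i | i | i | i) <;> simp [PF, Matrix.col, Pi.single_apply, Fin.ext_iff]
    rw [hE, Matrix.mulVec_add, Matrix.mulVec_smul, hFb, hFa, mul_assoc]

theorem PF_mulVec_PE_mulVec_aVec (α : ℂ) {s : ℕ} (j : Fin s) :
    PF p s *ᵥ PE p α s *ᵥ aVec p j =
      (α * (qi p (j : ℕ) * qi p (s - (j : ℕ)))) • aVec p j := by
  obtain ⟨_ | j, hj⟩ := j
  · have hE : PE p α s *ᵥ aVec p ⟨0, hj⟩ = 0 := by
      rw [Matrix.mulVec_single_one]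
      ext (i | i | i | i) <;> simp [PE, Matrix.col]
    simp [hE]
  · have hE : PE p α s *ᵥ aVec p ⟨j + 1, hj⟩ =
        (α * qi p (j + 1 : ℕ) * qi p (s - (j + 1 : ℕ))) • aVec p ⟨j, by omega⟩ := by
      rw [Matrix.mulVec_single_one]
      ext (i | i | i | i) <;> simp [PE, Matrix.col, Pi.single_apply, Fin.ext_iff]
    have hF : PF p s *ᵥ aVec p ⟨j, by omega⟩ = aVec p ⟨j + 1, hj⟩ := by
      rw [Matrix.mulVec_single_one]
      ext (i | i | i | i) <;> simp [PF, Matrix.col, Pi.single_apply, Fin.ext_iff]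
    rw [hE, Matrix.mulVec_smul, hF, mul_assoc]

variable {ρP : (α : ℂ) → (s : ℕ) → (Uq p →ₐ[ℂ] Matrix (PIdx p s) (PIdx p s) ℂ)}

theorem map_casimir_mulVec_single (hP : IsPRep p ρP) {α : ℂ} (hα : α = 1 ∨ α = -1) {s : ℕ}
    (hs : 1 ≤ s) (hsp : s < p) (i : PIdx p s) :
    ρP α s (casimir p) *ᵥ Pi.single i 1 = PF p s *ᵥ PE p α s *ᵥ Pi.single i 1 +
      (((q p - (q p)⁻¹) ^ 2)⁻¹ * (q p * PKdiag p α s i + (q p)⁻¹ * (PKdiag p α s i)⁻¹)) •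
        Pi.single i 1 := by
  obtain ⟨hK, hE, hF⟩ := hP α hα s hs (by omega)
  simp only [casimir, map_add, map_mul, map_smul, hK, hE, hF, map_KKinv_eq_diagonal hK, PK,
    Matrix.add_mulVec, Matrix.smul_mulVec, ← Matrix.mulVec_mulVec, Matrix.diagonal_mulVec_single,
    mul_one, ← Pi.single_smul, ← Pi.single_add, smul_eq_mul, Pi.inv_apply]

theorem torus_eigenvalue_eq (hp : 2 ≤ p) {α : ℂ} (hα : α = 1 ∨ α = -1) (s j : ℤ) :
    α * (qi p j * qi p (s - j)) + ((q p - (q p)⁻¹) ^ 2)⁻¹ *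
      (q p * (α * q p ^ (s - 1 - 2 * j)) + (q p)⁻¹ * (α * q p ^ (s - 1 - 2 * j))⁻¹) =
      α * casimirEigenvalue p s := by
  have hα' : α⁻¹ = α := by rcases hα with rfl | rfl <;> norm_num
  rw [← qi_mul_qi_add_torus_eq_casimirEigenvalue hp s j, mul_inv, hα']
  ring

theorem map_casimir_mulVec_bVec (hp : 2 ≤ p) (hP : IsPRep p ρP) {α : ℂ} (hα : α = 1 ∨ α = -1)
    {s : ℕ} (hs : 1 ≤ s) (hsp : s < p) (j : Fin s) :
    ρP α s (casimir p) *ᵥ bVec p j = (α * casimirEigenvalue p s) • bVec p j + aVec p j := by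
  rw [map_casimir_mulVec_single hP hα hs hsp, PF_mulVec_PE_mulVec_bVec α hsp,
    ← torus_eigenvalue_eq hp hα s (j : ℕ), add_smul, PKdiag]
  abel

theorem map_casimir_mulVec_aVec (hp : 2 ≤ p) (hP : IsPRep p ρP) {α : ℂ} (hα : α = 1 ∨ α = -1)
    {s : ℕ} (hs : 1 ≤ s) (hsp : s < p) (j : Fin s) :
    ρP α s (casimir p) *ᵥ aVec p j = (α * casimirEigenvalue p s) • aVec p j := by
  rw [map_casimir_mulVec_single hP hα hs hsp, PF_mulVec_PE_mulVec_aVec α,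
    ← torus_eigenvalue_eq hp hα s (j : ℕ), add_smul, PKdiag]

theorem entry_casimir_pow_mul_KK_pow (hp : 2 ≤ p) (hP : IsPRep p ρP) {α : ℂ}
    (hα : α = 1 ∨ α = -1) {s : ℕ} (hs : 1 ≤ s) (hsp : s < p) (j : Fin s) (n c : ℕ) :
    ρP α s (casimir p ^ n * KK p ^ c) (.inr (.inr (.inr j))) (.inl j) =
      (α * q p ^ ((s : ℤ) - 1 - 2 * (j : ℕ))) ^ c *
        (dual (α * casimirEigenvalue p s) 1 ^ n).snd := by
  have hcol := congrFun (pow_mulVec_of_jordan_chain (map_casimir_mulVec_bVec hp hP hα hs hsp j)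
    (map_casimir_mulVec_aVec hp hP hα hs hsp j) n) (.inr (.inr (.inr j)))
  rw [Matrix.mulVec_single_one, Matrix.col_apply] at hcol
  rw [map_mul, map_pow, map_pow, (hP α hα s hs (by omega)).1, PK, Matrix.diagonal_pow,
    Matrix.mul_diagonal, hcol]
  simp [PKdiag, mul_comm]

theorem GOf_casimir_pow_mul_KK_pow (hp : 2 ≤ p) (hP : IsPRep p ρP) {s : ℕ} (hs : 1 ≤ s)
    (hsp : s < p) (n c : ℕ) :
    GOf p ρP s (casimir p ^ n * KK p ^ c) =
      weightSum p s c * (dual (casimirEigenvalue p s) 1 ^ n).snd := by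
  have hneg : -1 * casimirEigenvalue p (p - s : ℕ) = casimirEigenvalue p s := by
    rw [Nat.cast_sub hsp.le, casimirEigenvalue_p_sub hp]
    ring
  have hentry (α : ℂ) (t : ℕ) (i j : PIdx p t) (x : Uq p) :
      (entry i j).comp (ρP α t).toLinearMap x = ρP α t x i j := rfl
  simp only [GOf, LinearMap.add_apply, LinearMap.sum_apply, hentry,
    entry_casimir_pow_mul_KK_pow hp hP (.inl rfl) hs hsp,
    entry_casimir_pow_mul_KK_pow hp hP (.inr rfl) (by omega : 1 ≤ p - s) (by omega), hneg,
    one_mul (casimirEigenvalue p s), ← Finset.sum_mul, ← add_mul, weightSum_eq_add hp hsp.le]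

theorem GOf_mem_torusInvariantForms (hP : IsPRep p ρP) {s : ℕ} (hs : 1 ≤ s) (hsp : s < p) :
    GOf p ρP s ∈ torusInvariantForms p :=
  add_mem
    (sum_mem fun _ _ =>
      entry_comp_mem_torusInvariantForms (hP 1 (.inl rfl) s hs (by omega)).1 rfl)
    (sum_mem fun _ _ =>
      entry_comp_mem_torusInvariantForms
        (hP (-1) (.inr rfl) (p - s) (by omega) (by omega)).1 rfl)

end Projective

/-! ### Convolution with a character -/

section Convolution

open scoped Matrix

section MapLeft

variable {R A B : Type*} [CommRing R] [Ring A] [Algebra R A] [Ring B] [Algebra R B]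
  {n : Type*} [Fintype n] [DecidableEq n]

/-- The algebra map `a ⊗ b ↦ ρ(a) ⊗ b`, where `Mat_n(R) ⊗ B` is identified with `Mat_n(B)`. -/
def mapLeft (ρ : A →ₐ[R] Matrix n n R) : A ⊗[R] B →ₐ[R] Matrix n n B :=
  Algebra.TensorProduct.lift ((Algebra.ofId R B).mapMatrix.comp ρ) (Matrix.scalarAlgHom n R)
    fun a b => by
      change _ * _ = _ * _
      ext i j
      simp [Matrix.scalar_apply, Matrix.mul_diagonal, Matrix.diagonal_mul, Algebra.ofId_apply,
        Algebra.commutes]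

theorem mapLeft_tmul_apply (ρ : A →ₐ[R] Matrix n n R) (a : A) (b : B) (i j : n) :
    mapLeft ρ (a ⊗ₜ[R] b) i j = ρ a i j • b := by
  simp [mapLeft, Matrix.scalar_apply, Matrix.mul_diagonal, Algebra.ofId_apply, Algebra.smul_def]

end MapLeft

variable {p : ℕ} {Δ : Uq p →ₐ[ℂ] (Uq p ⊗[ℂ] Uq p)}

theorem conv_chiOf_apply {n : Type} [Fintype n] [DecidableEq n]
    (ρ : Uq p →ₐ[ℂ] Matrix n n ℂ) (ψ : Uq p →ₗ[ℂ] ℂ) (x : Uq p) :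
    conv p Δ (chiOf p ρ) ψ x = ψ (mapLeft ρ (Δ x)).trace := by
  simp only [conv, LinearMap.comp_apply, AlgHom.toLinearMap_apply]
  induction Δ x using TensorProduct.induction_on with
  | zero => simp
  | tmul a b =>
    simp only [TensorProduct.map_tmul, LinearMap.mul'_apply, Matrix.trace, Matrix.diag_apply,
      mapLeft_tmul_apply, chiOf, LinearMap.comp_apply, AlgHom.toLinearMap_apply,
      Matrix.traceLinearMap_apply, ← Finset.sum_smul, map_smul, smul_eq_mul]
  | add a b ha hb => simp only [map_add, ha, hb, Matrix.trace_add]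

theorem conv_mem_torusInvariantForms (hΔ : Δ (KK p) = KK p ⊗ₜ[ℂ] KK p) {φ ψ : Uq p →ₗ[ℂ] ℂ}
    (hφ : φ ∈ torusInvariantForms p) (hψ : ψ ∈ torusInvariantForms p) :
    conv p Δ φ ψ ∈ torusInvariantForms p := by
  intro x
  simp only [conv, LinearMap.comp_apply, AlgHom.toLinearMap_apply, map_mul, hΔ]
  induction Δ x using TensorProduct.induction_on with
  | zero => simp
  | tmul a b => simp [hφ a, hψ b]
  | add a b ha hb => simp only [mul_add, add_mul, map_add, ha, hb]

variable {ρX : (α : ℂ) → (s : ℕ) → (Uq p →ₐ[ℂ] Matrix (Fin s) (Fin s) ℂ)}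

theorem mapLeft_comul_of_negOne (hp : 2 ≤ p) (hX : IsXRep p ρX) (hΔ : IsCoprod p Δ) :
    mapLeft (ρX (-1) 1) (Δ (KK p)) = Matrix.scalar (Fin 1) ((-1 : ℂ) • KK p) ∧
      mapLeft (ρX (-1) 1) (Δ (casimir p)) = Matrix.scalar (Fin 1) ((-1 : ℂ) • casimir p) := by
  obtain ⟨hK, hE, hF⟩ := hX (-1) (.inr rfl) 1 le_rfl (by omega)
  obtain ⟨hΔE, hΔF, hΔK, hΔKinv⟩ := hΔ
  have hKinv := map_KKinv_eq_diagonal hK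
  have tK : mapLeft (ρX (-1) 1) (Δ (KK p)) = Matrix.scalar (Fin 1) ((-1 : ℂ) • KK p) := by
    ext i j
    fin_cases i; fin_cases j
    simp [hΔK, mapLeft_tmul_apply, hK, XK]
  have tKinv : mapLeft (ρX (-1) 1) (Δ (KKinv p)) = Matrix.scalar (Fin 1) ((-1 : ℂ) • KKinv p) := by
    ext i j
    fin_cases i; fin_cases j
    simp [hΔKinv, mapLeft_tmul_apply, hKinv, inv_neg]
  have tE : mapLeft (ρX (-1) 1) (Δ (EE p)) = Matrix.scalar (Fin 1) (EE p) := by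
    ext i j
    fin_cases i; fin_cases j
    simp [hΔE, mapLeft_tmul_apply, hE, XE]
  have tF : mapLeft (ρX (-1) 1) (Δ (FF p)) = Matrix.scalar (Fin 1) ((-1 : ℂ) • FF p) := by
    ext i j
    fin_cases i; fin_cases j
    simp [hΔF, mapLeft_tmul_apply, hKinv, hF, XF, inv_neg]
  refine ⟨tK, ?_⟩
  simp only [casimir, map_add, map_mul, map_smul, tK, tKinv, tE, tF]
  ext i j
  fin_cases i; fin_cases j
  simp [Matrix.scalar_apply]
  module

theorem conv_chiOf_negOne_apply (hp : 2 ≤ p) (hX : IsXRep p ρX) (hΔ : IsCoprod p Δ)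
    (ψ : Uq p →ₗ[ℂ] ℂ) (n c : ℕ) :
    conv p Δ (chiOf p (ρX (-1) 1)) ψ (casimir p ^ n * KK p ^ c) =
      (-1) ^ n * (-1) ^ c * ψ (casimir p ^ n * KK p ^ c) := by
  obtain ⟨hK, hC⟩ := mapLeft_comul_of_negOne hp hX hΔ
  rw [conv_chiOf_apply, map_mul, map_mul, map_pow, map_pow, map_pow, map_pow, hK, hC, ← map_pow,
    ← map_pow, ← map_mul, Matrix.trace_fin_one, Matrix.scalar_apply, Matrix.diagonal_apply_eq,
    smul_pow, smul_pow, smul_mul_smul_comm, map_smul, smul_eq_mul]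

/-- The image of the Casimir element in `Mat_2(Ū_q)` under `x ↦ Σ ρ(x₁) ⊗ x₂`, where `ρ` is the
representation on `X^+(2)`. -/
def casimirMatrix (p : ℕ) : Matrix (Fin 2) (Fin 2) (Uq p) :=
  !![(q p)⁻¹ • casimir p + (q p * (q p - (q p)⁻¹)⁻¹) • KK p, (q p)⁻¹ • (FF p * KK p);
    EE p, q p • casimir p - ((q p)⁻¹ * (q p - (q p)⁻¹)⁻¹) • KK p]

/-- The image of `K` in `Mat_2(Ū_q)` under `x ↦ Σ ρ(x₁) ⊗ x₂`, where `ρ` is the representation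
on `X^+(2)`. -/
def torusMatrix (p : ℕ) : Matrix (Fin 2) (Fin 2) (Uq p) :=
  Matrix.diagonal ![q p • KK p, (q p)⁻¹ • KK p]

theorem mapLeft_comul_of_two (hp : 2 ≤ p) (hX : IsXRep p ρX) (hΔ : IsCoprod p Δ) :
    mapLeft (ρX 1 2) (Δ (KK p)) = torusMatrix p ∧
      mapLeft (ρX 1 2) (Δ (casimir p)) = casimirMatrix p := by
  obtain ⟨hK, hE, hF⟩ := hX 1 (.inl rfl) 2 (by omega) hp
  obtain ⟨hΔE, hΔF, hΔK, hΔKinv⟩ := hΔ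
  have hq := q_ne_zero p
  have hd := q_sub_inv_ne_zero hp
  have hKinv := map_KKinv_eq_diagonal hK
  have tK : mapLeft (ρX 1 2) (Δ (KK p)) = torusMatrix p := by
    ext i j
    fin_cases i <;> fin_cases j <;> simp [hΔK, mapLeft_tmul_apply, hK, XK, torusMatrix]
  have tKinv : mapLeft (ρX 1 2) (Δ (KKinv p)) =
      Matrix.diagonal ![(q p)⁻¹ • KKinv p, q p • KKinv p] := by
    ext i j
    fin_cases i <;> fin_cases j <;> simp [hΔKinv, mapLeft_tmul_apply, hKinv]
  have tE : mapLeft (ρX 1 2) (Δ (EE p)) = !![EE p, KK p; 0, EE p] := by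
    ext i j
    fin_cases i <;> fin_cases j <;> simp [hΔE, mapLeft_tmul_apply, hE, XE, qi_one hp]
  have tF : mapLeft (ρX 1 2) (Δ (FF p)) = !![(q p)⁻¹ • FF p, 0; 1, q p • FF p] := by
    ext i j
    fin_cases i <;> fin_cases j <;> simp [hΔF, mapLeft_tmul_apply, hF, hKinv, XF]
  refine ⟨tK, ?_⟩
  simp only [casimir, map_add, map_mul, map_smul, tK, tKinv, tE, tF, torusMatrix, casimirMatrix]
  ext i j
  fin_cases i <;> fin_cases j <;>
    simp only [Matrix.add_apply, Matrix.smul_apply, Matrix.mul_apply, Fin.sum_univ_two,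
      Matrix.of_apply, Matrix.cons_val', Matrix.cons_val_zero, Matrix.cons_val_one,
      Matrix.cons_val_fin_one, Matrix.diagonal_apply, Fin.zero_eta, Fin.mk_one, Fin.isValue,
      zero_ne_one, one_ne_zero, if_true, if_false, smul_mul_assoc, mul_zero, zero_mul,
      one_mul] <;>
    match_scalars <;> grind

theorem FF_mul_KK_mul_EE : FF p * (KK p * EE p) =
    q p ^ 2 • (KK p * casimir p) -
      ((q p - (q p)⁻¹) ^ 2)⁻¹ • (q p ^ 3 • (KK p * KK p) + q p • 1) := by
  have hq := q_ne_zero p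
  rw [← mul_assoc, FF_mul_KK, smul_mul_assoc, mul_assoc, FF_mul_EE_eq, mul_sub, mul_smul_comm,
    mul_add, mul_smul_comm, mul_smul_comm, KK_mul_KKinv]
  match_scalars <;> field_simp

theorem EE_mul_FF_mul_KK : EE p * (FF p * KK p) =
    KK p * casimir p - ((q p - (q p)⁻¹) ^ 2)⁻¹ • ((q p)⁻¹ • (KK p * KK p) + q p • 1) := by
  have h : EE p * FF p = casimir p -
      ((q p - (q p)⁻¹) ^ 2)⁻¹ • ((q p)⁻¹ • KK p + q p • KKinv p) := by
    rw [casimir_eq_EE_mul_FF, add_sub_cancel_right]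
  rw [← mul_assoc, h, sub_mul, ← commute_KK_casimir.eq, smul_mul_assoc, add_mul, smul_mul_assoc,
    smul_mul_assoc, KKinv_mul_KK]

theorem casimirMatrix_mul_self (hp : 2 ≤ p) :
    casimirMatrix p * casimirMatrix p =
      ((q p + (q p)⁻¹) • casimir p) • casimirMatrix p -
        (casimir p * casimir p + ((q p - (q p)⁻¹) ^ 2)⁻¹ • 1) •
          (1 : Matrix (Fin 2) (Fin 2) (Uq p)) := by
  have hq := q_ne_zero p
  have hd := q_sub_inv_ne_zero hp
  have hKKF : KK p * (FF p * KK p) = (q p ^ 2)⁻¹ • (FF p * (KK p * KK p)) := by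
    rw [← mul_assoc, KK_mul_FF, smul_mul_assoc, mul_assoc]
  have hCF : casimir p * (FF p * KK p) = FF p * (KK p * casimir p) := by
    rw [← mul_assoc, ← commute_FF_casimir.eq, mul_assoc, commute_KK_casimir.eq]
  ext i j
  fin_cases i <;> fin_cases j <;>
    simp only [casimirMatrix, Matrix.sub_apply, Matrix.smul_apply, Matrix.mul_apply,
      Fin.sum_univ_two, Matrix.of_apply, Matrix.cons_val', Matrix.cons_val_zero,
      Matrix.cons_val_one, Matrix.cons_val_fin_one, Fin.zero_eta, Fin.mk_one, Fin.isValue,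
      Matrix.one_apply_eq, ne_eq, zero_ne_one, one_ne_zero, not_false_eq_true,
      Matrix.one_apply_ne, smul_eq_mul, mul_add, add_mul, mul_sub, sub_mul, smul_mul_assoc,
      mul_smul_comm, mul_assoc, FF_mul_KK_mul_EE, EE_mul_FF_mul_KK, hKKF, hCF,
      commute_EE_casimir.eq, EE_mul_KK, commute_KK_casimir.eq, mul_zero, mul_one] <;>
    match_scalars <;> grind

theorem trace_casimirMatrix_pow_add_two_mul (hp : 2 ≤ p) (n : ℕ)
    (T : Matrix (Fin 2) (Fin 2) (Uq p)) :
    (casimirMatrix p ^ (n + 2) * T).trace =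
      (q p + (q p)⁻¹) • (casimir p * (casimirMatrix p ^ (n + 1) * T).trace) -
        (casimir p ^ 2 * (casimirMatrix p ^ n * T).trace +
          ((q p - (q p)⁻¹) ^ 2)⁻¹ • (casimirMatrix p ^ n * T).trace) := by
  rw [pow_succ', pow_succ', ← mul_assoc (casimirMatrix p), casimirMatrix_mul_self hp, sub_mul,
    sub_mul, smul_mul_assoc, smul_mul_assoc, smul_mul_assoc, smul_mul_assoc, one_mul, ← pow_succ',
    Matrix.trace_sub, Matrix.trace_smul, Matrix.trace_smul, smul_eq_mul, smul_eq_mul, add_mul,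
    smul_mul_assoc, smul_mul_assoc, one_mul, ← sq]

theorem torusMatrix_pow (c : ℕ) :
    torusMatrix p ^ c = Matrix.diagonal ![q p ^ c • KK p ^ c, (q p ^ c)⁻¹ • KK p ^ c] := by
  rw [torusMatrix, Matrix.diagonal_pow]
  congr 1
  ext i
  fin_cases i <;> simp [smul_pow]

theorem trace_torusMatrix_pow (c : ℕ) :
    (torusMatrix p ^ c).trace = (q p ^ c + (q p ^ c)⁻¹) • KK p ^ c := by
  simp [torusMatrix_pow, add_smul]

theorem trace_casimirMatrix_mul_torusMatrix_pow (c : ℕ) :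
    (casimirMatrix p * torusMatrix p ^ c).trace =
      ((q p)⁻¹ * q p ^ c + q p * (q p ^ c)⁻¹) • (casimir p * KK p ^ c) +
        ((q p ^ (c + 1) - (q p ^ (c + 1))⁻¹) * (q p - (q p)⁻¹)⁻¹) • KK p ^ (c + 1) := by
  simp only [torusMatrix_pow, casimirMatrix, Matrix.trace_fin_two, Matrix.mul_diagonal,
    Matrix.of_apply, Matrix.cons_val', Matrix.cons_val_zero, Matrix.cons_val_one,
    Matrix.cons_val_fin_one, add_mul, sub_mul, smul_mul_assoc, mul_smul_comm, ← pow_succ' (KK p)]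
  rw [pow_succ' (q p), mul_inv]
  module

/-- Taking traces turns the quadratic relation for `casimirMatrix` into the recurrence satisfied by
the power sums `zp ^ n + zm ^ n` of the roots of `X² - (q + q⁻¹)zX + z² + (q - q⁻¹)⁻²`. -/
theorem apply_casimir_pow_mul_trace {R : Type*} [CommRing R] [Algebra ℂ R] (hp : 2 ≤ p)
    {ℓ : R →ₗ[ℂ] ℂ} {z zp zm : R} {w : ℕ → ℂ} {ψ : Uq p →ₗ[ℂ] ℂ}
    (hadd : zp + zm = (q p + (q p)⁻¹) • z)
    (hmul : zp * zm = z ^ 2 + ((q p - (q p)⁻¹) ^ 2)⁻¹ • 1)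
    (hw : ∀ c, w c * (q p ^ c)⁻¹ = w c * q p ^ c)
    (hψ : ∀ k c, ψ (casimir p ^ k * KK p ^ c) = w c * ℓ (z ^ k)) (n k c : ℕ) :
    ψ (casimir p ^ k * (casimirMatrix p ^ n * torusMatrix p ^ c).trace) =
      q p ^ c * w c * ℓ (z ^ k * (zp ^ n + zm ^ n)) := by
  induction n using Nat.twoStepInduction generalizing k with
  | zero =>
    simp only [pow_zero, one_mul, trace_torusMatrix_pow, mul_smul_comm, map_smul, hψ, smul_eq_mul,
      mul_add, mul_one, map_add]
    linear_combination ℓ (z ^ k) * hw c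
  | one =>
    simp only [pow_one, trace_casimirMatrix_mul_torusMatrix_pow, mul_add, mul_smul_comm,
      ← mul_assoc, ← pow_succ, map_add, map_smul, hψ, smul_eq_mul, hadd]
    linear_combination q p * ℓ (z ^ (k + 1)) * hw c -
      (q p - (q p)⁻¹)⁻¹ * ℓ (z ^ k) * hw (c + 1)
  | more n ih₀ ih₁ =>
    have hz : z ^ k * (zp ^ (n + 2) + zm ^ (n + 2)) =
        (q p + (q p)⁻¹) • (z ^ (k + 1) * (zp ^ (n + 1) + zm ^ (n + 1))) -
          (z ^ (k + 2) * (zp ^ n + zm ^ n) +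
            ((q p - (q p)⁻¹) ^ 2)⁻¹ • (z ^ k * (zp ^ n + zm ^ n))) := by
      rw [Algebra.smul_def] at hadd hmul ⊢
      rw [Algebra.smul_def]
      linear_combination z ^ k * (zp ^ (n + 1) + zm ^ (n + 1)) * hadd -
        z ^ k * (zp ^ n + zm ^ n) * hmul
    rw [trace_casimirMatrix_pow_add_two_mul hp, hz, mul_sub, mul_add, mul_smul_comm, mul_smul_comm,
      ← mul_assoc, ← mul_assoc, ← pow_succ, ← pow_add]
    simp only [map_sub, map_add, map_smul, ih₀, ih₁, smul_eq_mul]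
    ring

theorem conv_chiOf_two_apply (hp : 2 ≤ p) (hX : IsXRep p ρX) (hΔ : IsCoprod p Δ)
    (ψ : Uq p →ₗ[ℂ] ℂ) (n c : ℕ) :
    conv p Δ (chiOf p (ρX 1 2)) ψ (casimir p ^ n * KK p ^ c) =
      ψ (casimirMatrix p ^ n * torusMatrix p ^ c).trace := by
  obtain ⟨hK, hC⟩ := mapLeft_comul_of_two hp hX hΔ
  rw [conv_chiOf_apply, map_mul, map_mul, map_pow, map_pow, map_pow, map_pow, hK, hC]

end Convolution

/-! ### The products `χ^+_2 G_s` and `χ^-_1 G_s` -/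

section Products

variable {p : ℕ} {ρX : (α : ℂ) → (s : ℕ) → (Uq p →ₐ[ℂ] Matrix (Fin s) (Fin s) ℂ)}
  {ρP : (α : ℂ) → (s : ℕ) → (Uq p →ₐ[ℂ] Matrix (PIdx p s) (PIdx p s) ℂ)}
  {Δ : Uq p →ₐ[ℂ] (Uq p ⊗[ℂ] Uq p)}

theorem qi_smul_GOf_mem_torusInvariantForms (hp : 2 ≤ p) (hP : IsPRep p ρP) {m : ℕ}
    (hmp : m ≤ p) : qi p m • GOf p ρP m ∈ torusInvariantForms p := by
  rcases m.eq_zero_or_pos with rfl | hm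
  · simp
  rcases hmp.eq_or_lt with rfl | hmp
  · simp [qi_p hp]
  exact Submodule.smul_mem _ _ (GOf_mem_torusInvariantForms hP hm hmp)

theorem qi_smul_GOf_apply (hp : 2 ≤ p) (hP : IsPRep p ρP) {m : ℕ} (hmp : m ≤ p) (n c : ℕ) :
    (qi p m • GOf p ρP m) (casimir p ^ n * KK p ^ c) =
      weightSum p m c * (dual (casimirEigenvalue p m) (qi p m) ^ n).snd := by
  rw [snd_dual_pow]
  rcases m.eq_zero_or_pos with rfl | hm
  · simp
  rcases hmp.eq_or_lt with rfl | hmp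
  · simp [qi_p hp]
  rw [LinearMap.smul_apply, GOf_casimir_pow_mul_KK_pow hp hP hm hmp, smul_eq_mul]
  ring

theorem dual_casimirEigenvalue_qi_add (s : ℤ) :
    dual (casimirEigenvalue p (s + 1)) (qi p (s + 1)) +
        dual (casimirEigenvalue p (s - 1)) (qi p (s - 1)) =
      (q p + (q p)⁻¹) • dual (casimirEigenvalue p s) (qi p s) := by
  ext
  · simpa using casimirEigenvalue_add_one_add_sub_one s
  · simpa using qi_add_one_add_qi_sub_one s

theorem dual_casimirEigenvalue_qi_mul (hp : 2 ≤ p) (s : ℤ) :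
    dual (casimirEigenvalue p (s + 1)) (qi p (s + 1)) *
        dual (casimirEigenvalue p (s - 1)) (qi p (s - 1)) =
      dual (casimirEigenvalue p s) (qi p s) ^ 2 + ((q p - (q p)⁻¹) ^ 2)⁻¹ • 1 := by
  ext
  · simpa using casimirEigenvalue_add_one_mul_sub_one hp s
  · simpa using casimirEigenvalue_mul_qi s

theorem qi_smul_conv_chiOf_two_GOf (hp : 2 ≤ p) (hX : IsXRep p ρX) (hP : IsPRep p ρP)
    (hΔ : IsCoprod p Δ) {s : ℕ} (hs : 1 ≤ s) (hsp : s < p) :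
    qi p s • conv p Δ (chiOf p (ρX 1 2)) (GOf p ρP s) =
      qi p (s - 1 : ℕ) • GOf p ρP (s - 1) + qi p (s + 1 : ℕ) • GOf p ρP (s + 1) := by
  refine torusInvariantForms_ext hp ?_ ?_ fun n c => ?_
  · exact Submodule.smul_mem _ _ <| conv_mem_torusInvariantForms hΔ.2.2.1
      (chiOf_mem_torusInvariantForms _) (GOf_mem_torusInvariantForms hP hs hsp)
  · exact add_mem (qi_smul_GOf_mem_torusInvariantForms hp hP (by omega))
      (qi_smul_GOf_mem_torusInvariantForms hp hP (by omega))
  have htrace := apply_casimir_pow_mul_trace hp (ℓ := TrivSqZeroExt.sndHom ℂ ℂ)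
    (dual_casimirEigenvalue_qi_add s) (dual_casimirEigenvalue_qi_mul hp s)
    (weightSum_mul_inv_q_pow hp s) (qi_smul_GOf_apply hp hP hsp.le) n 0 c
  simp only [pow_zero, one_mul, map_add, TrivSqZeroExt.sndHom_apply] at htrace
  rw [LinearMap.smul_apply, conv_chiOf_two_apply hp hX hΔ, ← LinearMap.smul_apply, htrace,
    LinearMap.add_apply, qi_smul_GOf_apply hp hP (by omega), qi_smul_GOf_apply hp hP (by omega),
    Nat.cast_sub hs, Nat.cast_add, Nat.cast_one, weightSum_add_one, weightSum_sub_one hp]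
  ring

theorem conv_chiOf_two_GOf (hp : 2 ≤ p) (hX : IsXRep p ρX) (hP : IsPRep p ρP)
    (hΔ : IsCoprod p Δ) {s : ℕ} (hs : 1 ≤ s) (hsp : s < p) :
    conv p Δ (chiOf p (ρX 1 2)) (GOf p ρP s) =
      (qi p (s - 1 : ℕ) / qi p s) • GOf p ρP (s - 1) +
        (qi p (s + 1 : ℕ) / qi p s) • GOf p ρP (s + 1) := by
  rw [div_eq_inv_mul, div_eq_inv_mul, mul_smul, mul_smul, ← smul_add,
    ← qi_smul_conv_chiOf_two_GOf hp hX hP hΔ hs hsp, inv_smul_smul₀ (qi_ne_zero hp hs hsp)]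

theorem conv_chiOf_negOne_GOf (hp : 2 ≤ p) (hX : IsXRep p ρX) (hP : IsPRep p ρP)
    (hΔ : IsCoprod p Δ) {s : ℕ} (hs : 1 ≤ s) (hsp : s < p) :
    conv p Δ (chiOf p (ρX (-1) 1)) (GOf p ρP s) = -GOf p ρP (p - s) := by
  refine torusInvariantForms_ext hp ?_ ?_ fun n c => ?_
  · exact conv_mem_torusInvariantForms hΔ.2.2.1
      (chiOf_mem_torusInvariantForms _) (GOf_mem_torusInvariantForms hP hs hsp)
  · exact neg_mem (GOf_mem_torusInvariantForms hP (by omega) (by omega))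
  rw [conv_chiOf_negOne_apply hp hX hΔ, LinearMap.neg_apply,
    GOf_casimir_pow_mul_KK_pow hp hP hs hsp, GOf_casimir_pow_mul_KK_pow hp hP (by omega) (by omega),
    Nat.cast_sub hsp.le, casimirEigenvalue_p_sub hp, weightSum_p_sub hp, snd_dual_neg_pow]
  ring

end Products

/-- there exist scalars `β_s, γ_s, λ_s, η_s, δ_s` such that the
products `χ^+_2 G_s` and `χ^-_1 G_s` have the stated shapes. -/
theorem statement_17 (p : ℕ) (hp : 2 ≤ p)
    (ρX : (α : ℂ) → (s : ℕ) → (Uq p →ₐ[ℂ] Matrix (Fin s) (Fin s) ℂ))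
    (hX : IsXRep p ρX)
    (ρP : (α : ℂ) → (s : ℕ) → (Uq p →ₐ[ℂ] Matrix (PIdx p s) (PIdx p s) ℂ))
    (hP : IsPRep p ρP)
    (Δ : Uq p →ₐ[ℂ] (Uq p ⊗[ℂ] Uq p)) (hΔ : IsCoprod p Δ) :
    ∃ beta gamma lam eta delta : ℕ → ℂ,
      (∀ s : ℕ, 2 ≤ s → s ≤ p - 2 →
        conv p Δ (chiOf p (ρX 1 2)) (GOf p ρP s) =
          beta s • GOf p ρP (s - 1) + gamma s • GOf p ρP (s + 1)
            + lam s • (chiOf p (ρX 1 (s - 1)) + chiOf p (ρX (-1) (p - s + 1))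
                - chiOf p (ρX 1 (s + 1)) - chiOf p (ρX (-1) (p - s - 1))))
      ∧ (conv p Δ (chiOf p (ρX 1 2)) (GOf p ρP 1) =
          gamma 1 • GOf p ρP 2
            + lam 1 • (chiOf p (ρX (-1) p) - chiOf p (ρX 1 2) - chiOf p (ρX (-1) (p - 2))))
      ∧ (conv p Δ (chiOf p (ρX 1 2)) (GOf p ρP (p - 1)) =
          beta (p - 1) • GOf p ρP (p - 2)
            + lam (p - 1) • (chiOf p (ρX 1 (p - 2)) + chiOf p (ρX (-1) 2)
                - chiOf p (ρX 1 p)))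
      ∧ (∀ s : ℕ, 1 ≤ s → s ≤ p - 1 →
          conv p Δ (chiOf p (ρX (-1) 1)) (GOf p ρP s) =
            eta s • GOf p ρP (p - s)
              + delta s • (chiOf p (ρX 1 (p - s)) + chiOf p (ρX (-1) s))) := by
  have htwo {s : ℕ} (hs : 1 ≤ s) (hsp : s < p) := conv_chiOf_two_GOf hp hX hP hΔ hs hsp
  refine ⟨fun s => qi p (s - 1 : ℕ) / qi p s, fun s => qi p (s + 1 : ℕ) / qi p s, 0, -1, 0,
    fun s hs hsp => ?_, ?_, ?_, fun s hs hsp => ?_⟩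
  · simpa using htwo (by omega : 1 ≤ s) (by omega)
  · simpa using htwo le_rfl (by omega)
  · have hpred : p - 1 + 1 = p := by omega
    simpa [hpred, qi_p hp, Nat.sub_sub] using htwo (by omega : 1 ≤ p - 1) (by omega)
  · simpa using conv_chiOf_negOne_GOf hp hX hP hΔ hs (by omega)

end Uqsl2
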